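/- arXiv:0801.3714 — 3 statements merged into one kernel-verified Lean document; each statement's English description precedes it below -/
import Mathlib

section
/- If G is a bridgeless cubic graph, then for every edge e of G there is a perfect matching F of G with e ∈ F. -/
/-! Multigraphs: vertex type `V`, edge type `E`, incidence map `ends : E → Sym2 V`. -/

namespace Mg

variable {V E : Type}

/-- No loops: no edge has equal endpoints. -/
def NoLoops (ends : E → Sym2 V) : Prop := ∀ e, ¬ (ends e).IsDiag

/-- Cubic: every vertex is incident with exactly three edges. -/
def IsCubic (ends : E → Sym2 V) : Prop := ∀ v, {e | v ∈ ends e}.ncard = 3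

/-- Reachability using only edges in `F`. -/
def Reach (ends : E → Sym2 V) (F : Set E) : V → V → Prop :=
  Relation.ReflTransGen (fun a b => ∃ e ∈ F, ends e = s(a, b))

/-- Connected. -/
def Connected (ends : E → Sym2 V) : Prop := ∀ v w, Reach ends Set.univ v w

/-- Bridgeless: the endpoints of each edge remain joined after its removal. -/
def Bridgeless (ends : E → Sym2 V) : Prop :=
  ∀ e v w, ends e = s(v, w) → Reach ends {f | f ≠ e} v w

/-- A 2-factor: every vertex is incident with exactly two edges of `F`. -/
def IsTwoFactor (ends : E → Sym2 V) (F : Set E) : Prop :=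
  ∀ v, {e | e ∈ F ∧ v ∈ ends e}.ncard = 2

/-- The component of `v` in the spanning subgraph with edge set `F`. -/
def component (ends : E → Sym2 V) (F : Set E) (v : V) : Set V := {w | Reach ends F v w}

/-- Every 2-factor consists only of 5-cycles: each component of any 2-factor
has exactly five vertices. -/
def TwoFactorsAllC5 (ends : E → Sym2 V) : Prop :=
  ∀ F : Set E, IsTwoFactor ends F → ∀ v, (component ends F v).ncard = 5

/-- A perfect matching: every vertex is incident with exactly one edge of `M`. -/
def IsPerfectMatching (ends : E → Sym2 V) (M : Set E) : Prop :=
  ∀ v, ∃! e, e ∈ M ∧ v ∈ ends e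

/-- A cycle of length `n`: `n` distinct vertices and `n` distinct edges, cyclically. -/
def HasCycle (ends : E → Sym2 V) (n : ℕ) : Prop :=
  ∃ (c : ZMod n → V) (f : ZMod n → E), Function.Injective c ∧ Function.Injective f ∧
    ∀ i, ends (f i) = s(c i, c (i + 1))

end Mg

/-!
Call a graph in which every vertex has degree `r` and every odd vertex set is left by at least `r`
edges an `r`-graph; a bridgeless cubic graph is a `3`-graph, since an odd set is left by an odd
number of edges, and not by a single one. Let `e = ab` be an edge of an `r`-graph. If `G - a - b`
had no perfect matching, Tutte's theorem and parity would give a vertex set `S` containing `a` and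
`b` for which `G - S` has at least `|S|` odd components. These are left by at least `r |S|` edges,
all of which end in `S`; but `S` meets at most `r |S|` edges and one of them, `e`, stays inside `S`.
-/

namespace Mg

open Finset

section SimpleGraph

variable {W : Type*} {G : SimpleGraph W}

/-- `𝒪` consists of pairwise disjoint vertex sets of odd size that avoid `S`, and every edge leaving
a member of `𝒪` ends in `S`. This records what is needed of the odd components of `G - S` without
mentioning the subtype on which `G - S` lives. -/
structure OddSeparation (G : SimpleGraph W) (S : Finset W) (𝒪 : Finset (Finset W)) : Prop where
  odd_card : ∀ C ∈ 𝒪, Odd #C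
  disjoint : ∀ C ∈ 𝒪, Disjoint C S
  pairwiseDisjoint : (𝒪 : Set (Finset W)).PairwiseDisjoint id
  mem_of_adj : ∀ C ∈ 𝒪, ∀ x ∈ C, ∀ y ∉ C, G.Adj x y → y ∈ S

section Tutte

variable [Fintype W]

open Classical in
/-- The vertex set of a component of `G - u`, as a set of vertices of `G`. -/
noncomputable def componentVerts {u : Set W}
    (c : ((⊤ : G.Subgraph).deleteVerts u).coe.ConnectedComponent) : Finset W :=
  c.supp.toFinset.map (Function.Embedding.subtype _)

variable {u : Set W} {c d : ((⊤ : G.Subgraph).deleteVerts u).coe.ConnectedComponent} {x y : W}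

lemma mem_componentVerts :
    x ∈ componentVerts c ↔ ∃ hx, (⟨x, hx⟩ : ((⊤ : G.Subgraph).deleteVerts u).verts) ∈ c.supp := by
  simp [componentVerts]

lemma card_componentVerts : #(componentVerts c) = c.supp.ncard := by
  classical
  rw [componentVerts, card_map, Set.ncard_eq_toFinset_card']

lemma notMem_of_mem_componentVerts (hx : x ∈ componentVerts c) : x ∉ u := by
  obtain ⟨hxu, -⟩ := mem_componentVerts.1 hx
  exact hxu.2

lemma eq_of_mem_componentVerts (hc : x ∈ componentVerts c) (hd : x ∈ componentVerts d) :
    c = d := by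
  obtain ⟨_, hxc⟩ := mem_componentVerts.1 hc
  obtain ⟨_, hxd⟩ := mem_componentVerts.1 hd
  exact SimpleGraph.ConnectedComponent.eq_of_common_vertex hxc hxd

lemma componentVerts_injective : Function.Injective (componentVerts (G := G) (u := u)) := by
  intro c d hcd
  obtain ⟨x, hx⟩ := c.nonempty_supp
  have hxc : x.1 ∈ componentVerts c := mem_componentVerts.2 ⟨x.2, hx⟩
  exact eq_of_mem_componentVerts hxc (hcd ▸ hxc)

lemma mem_componentVerts_of_adj (hx : x ∈ componentVerts c) (hy : y ∉ u) (hxy : G.Adj x y) :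
    y ∈ componentVerts c := by
  obtain ⟨hxu, hxc⟩ := mem_componentVerts.1 hx
  refine mem_componentVerts.2 ⟨⟨trivial, hy⟩, c.mem_supp_of_adj_mem_supp hxc ?_⟩
  exact SimpleGraph.Subgraph.deleteVerts_adj.2 ⟨trivial, hxu.2, trivial, hy, hxy⟩

open Classical in
/-- The vertex sets of the odd components of `G - u`. -/
noncomputable def oddComponentVerts (G : SimpleGraph W) (u : Set W) : Finset (Finset W) :=
  ((⊤ : G.Subgraph).deleteVerts u).coe.oddComponents.toFinset.map
    ⟨componentVerts, componentVerts_injective⟩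

lemma card_oddComponentVerts (G : SimpleGraph W) (u : Set W) :
    #(oddComponentVerts G u) = ((⊤ : G.Subgraph).deleteVerts u).coe.oddComponents.ncard := by
  classical
  rw [oddComponentVerts, card_map, Set.ncard_eq_toFinset_card']

lemma oddSeparation_oddComponentVerts (G : SimpleGraph W) (S : Finset W) :
    OddSeparation G S (oddComponentVerts G S) := by
  have exists_component : ∀ C ∈ oddComponentVerts G S,
      ∃ c : ((⊤ : G.Subgraph).deleteVerts (S : Set W)).coe.ConnectedComponent,
        Odd c.supp.ncard ∧ componentVerts c = C := by
    simp [oddComponentVerts, SimpleGraph.oddComponents]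
  refine ⟨fun C hC ↦ ?_, fun C hC ↦ ?_, fun C hC D hD hCD ↦ ?_, fun C hC x hx y hy hxy ↦ ?_⟩ <;>
    obtain ⟨c, hc, rfl⟩ := exists_component C hC
  · rwa [card_componentVerts]
  · exact disjoint_left.2 fun x hx ↦ mod_cast notMem_of_mem_componentVerts hx
  · obtain ⟨d, -, rfl⟩ := exists_component D hD
    exact disjoint_left.2 fun x hxc hxd ↦ hCD (congrArg _ (eq_of_mem_componentVerts hxc hxd))
  · by_contra hyS
    exact hy (mem_componentVerts_of_adj hx (mod_cast hyS) hxy)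

lemma odd_card_oddComponentVerts_add_card (G : SimpleGraph W) (S : Finset W) :
    Odd (#(oddComponentVerts G S) + #S) ↔ Odd (Fintype.card W) := by
  have hverts : ((⊤ : G.Subgraph).deleteVerts (S : Set W)).verts = (S : Set W)ᶜ := by
    rw [SimpleGraph.Subgraph.deleteVerts_verts, SimpleGraph.Subgraph.verts_top,
      Set.compl_eq_univ_sdiff]
  have hcard : Nat.card ((⊤ : G.Subgraph).deleteVerts (S : Set W)).verts + #S =
      Fintype.card W := by
    rw [Nat.card_coe_set_eq, hverts, ← Set.ncard_coe_finset, add_comm, Set.ncard_add_ncard_compl,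
      Nat.card_eq_fintype_card]
  rw [card_oddComponentVerts, ← hcard, Nat.odd_add, Nat.odd_add,
    SimpleGraph.odd_ncard_oddComponents]

theorem exists_isPerfectMatching_of_oddSeparation (hW : Even (Fintype.card W))
    (h : ∀ S 𝒪, OddSeparation G S 𝒪 → #𝒪 ≤ #S + 1) :
    ∃ M : G.Subgraph, M.IsPerfectMatching := by
  classical
  refine SimpleGraph.tutte.2 fun u hu ↦ ?_
  lift u to Finset W using u.toFinite
  rw [SimpleGraph.IsTutteViolator, Set.ncard_coe_finset, ← card_oddComponentVerts] at hu
  have hle := h u _ (oddSeparation_oddComponentVerts G u)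
  have hparity := (odd_card_oddComponentVerts_add_card G u).not.2 (Nat.not_odd_iff_even.2 hW)
  rw [Nat.not_odd_iff_even, Nat.even_iff] at hparity
  omega

end Tutte

lemma OddSeparation.of_induce_compl [DecidableEq W] {T : Finset W}
    {S : Finset ↥((T : Set W)ᶜ)} {𝒪 : Finset (Finset ↥((T : Set W)ᶜ))}
    (h : OddSeparation (G.induce (T : Set W)ᶜ) S 𝒪) :
    OddSeparation G (S.map (.subtype _) ∪ T)
      (𝒪.map (mapEmbedding (.subtype _)).toEmbedding) where
  odd_card := by simpa using h.odd_card
  disjoint := by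
    simp only [forall_mem_map, disjoint_union_right]
    refine fun C hC ↦ ⟨(disjoint_map _).2 (h.disjoint C hC), disjoint_left.2 ?_⟩
    simp +contextual
  pairwiseDisjoint := by
    rw [coe_map]
    rintro _ ⟨C, hC, rfl⟩ _ ⟨D, hD, rfl⟩ hCD
    exact (disjoint_map _).2 (h.pairwiseDisjoint hC hD (ne_of_apply_ne _ hCD))
  mem_of_adj := by
    simp only [forall_mem_map]
    intro C hC x hx y hy hxy
    obtain ⟨x, hxC, rfl⟩ := mem_map.1 hx
    by_cases hyT : y ∈ T
    · exact mem_union_right _ hyT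
    · have hyC : ⟨y, hyT⟩ ∉ C := fun hyC ↦ hy (mem_map_of_mem _ hyC)
      exact mem_union_left _ (mem_map_of_mem _ (h.mem_of_adj C hC x hxC ⟨y, hyT⟩ hyC hxy))

lemma exists_isPerfectMatching_adj_of_induce_compl {a b : W} (hab : G.Adj a b)
    {P : (G.induce ({a, b} : Set W)ᶜ).Subgraph} (hP : P.IsPerfectMatching) :
    ∃ M : G.Subgraph, M.IsPerfectMatching ∧ M.Adj a b := by
  let ι := (SimpleGraph.Embedding.induce (G := G) ({a, b} : Set W)ᶜ).toHom
  have hPmap : (P.map ι).IsMatching := hP.1.map ι Subtype.val_injective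
  have hverts : (P.map ι).verts = ({a, b} : Set W)ᶜ := by
    rw [SimpleGraph.Subgraph.map_verts, hP.2.verts_eq_univ, Set.image_univ]
    exact Subtype.range_val
  refine ⟨P.map ι ⊔ G.subgraphOfAdj hab, ⟨hPmap.sup (.subgraphOfAdj hab) ?_, fun v ↦ ?_⟩, ?_⟩
  · rw [hPmap.support_eq_verts, hverts, SimpleGraph.support_subgraphOfAdj]
    exact disjoint_compl_left
  · rw [SimpleGraph.Subgraph.verts_sup, hverts, SimpleGraph.subgraphOfAdj_verts,
      Set.compl_union_self]
    trivial
  · simp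

theorem exists_isPerfectMatching_adj_of_oddSeparation [Fintype W] (hW : Even (Fintype.card W))
    {a b : W} (hab : G.Adj a b)
    (h : ∀ S 𝒪, OddSeparation G S 𝒪 → a ∈ S → b ∈ S → #𝒪 < #S) :
    ∃ M : G.Subgraph, M.IsPerfectMatching ∧ M.Adj a b := by
  classical
  suffices ∃ P : (G.induce ({a, b} : Finset W)ᶜ).Subgraph, P.IsPerfectMatching by
    rw [coe_pair] at this
    exact this.elim fun _ ↦ exists_isPerfectMatching_adj_of_induce_compl hab
  have hcard : Fintype.card ↥(({a, b} : Finset W) : Set W)ᶜ + 2 = Fintype.card W := by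
    rw [← Nat.card_eq_fintype_card, ← Nat.card_eq_fintype_card (α := W), Nat.card_coe_set_eq,
      ← Set.ncard_add_ncard_compl ({a, b} : Finset W), Set.ncard_coe_finset, card_pair hab.ne,
      add_comm]
  refine exists_isPerfectMatching_of_oddSeparation (by grind) fun S 𝒪 hS ↦ ?_
  have hlt := h _ _ hS.of_induce_compl (by simp) (by simp)
  rw [card_map] at hlt
  have hle : #(S.map (.subtype _) ∪ {a, b}) ≤ #S + 2 := by
    grw [card_union_le, card_map, card_le_two]
  omega

end SimpleGraph

section Multigraph

variable {V E : Type} {ends : E → Sym2 V} {r : ℕ} {X S : Finset V}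

lemma exists_isPerfectMatching_of_fromEdgeSet {e : E}
    {N : (SimpleGraph.fromEdgeSet (Set.range ends)).Subgraph} (hN : N.IsPerfectMatching)
    (he : ends e ∈ N.edgeSet) : ∃ M : Set E, IsPerfectMatching ends M ∧ e ∈ M := by
  have hrange : N.edgeSet ⊆ Set.range ends := by
    refine N.edgeSet_subset.trans ?_
    simp
  obtain ⟨M, heM, hM⟩ := (Set.bijOn_singleton.2 rfl).exists_extend
    (Set.singleton_subset_iff.2 he) hrange
  refine ⟨M, fun v ↦ ?_, heM rfl⟩
  obtain ⟨w, hvw, hw⟩ := SimpleGraph.Subgraph.isPerfectMatching_iff.1 hN v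
  obtain ⟨f, hfM, hf⟩ := hM.surjOn (SimpleGraph.Subgraph.mem_edgeSet.2 hvw)
  refine ⟨f, ⟨hfM, by simp [hf]⟩, fun g ⟨hgM, hvg⟩ ↦ hM.injOn hgM hfM ?_⟩
  obtain ⟨w', hw'⟩ := Sym2.mem_iff_exists.1 hvg
  have hadj : N.Adj v w' := by simpa [hw'] using hM.mapsTo hgM
  rw [hf, hw', hw w' hadj]

variable [Fintype E]

open Classical in
/-- The edges incident with `v`, as a finset so that they can be counted together with `cut`. -/
noncomputable def incidentEdges (ends : E → Sym2 V) (v : V) : Finset E := {f | v ∈ ends f}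

open Classical in
/-- The edge cut of `X`: the edges with one end in `X` and the other outside. -/
noncomputable def cut (ends : E → Sym2 V) (X : Finset V) : Finset E :=
  {f | ∃ x ∈ X, ∃ y ∉ X, ends f = s(x, y)}

lemma mem_incidentEdges {v : V} {f : E} : f ∈ incidentEdges ends v ↔ v ∈ ends f := by
  simp [incidentEdges]

lemma mem_cut {f : E} : f ∈ cut ends X ↔ ∃ x ∈ X, ∃ y ∉ X, ends f = s(x, y) := by
  simp [cut]

lemma mem_cut_iff_of_ends_eq {f : E} {p q : V} (hf : ends f = s(p, q)) :
    f ∈ cut ends X ↔ p ∈ X ∧ q ∉ X ∨ q ∈ X ∧ p ∉ X := by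
  simp only [mem_cut, hf, Sym2.eq_iff]
  grind

lemma cut_subset_biUnion_incidentEdges [DecidableEq E] (ends : E → Sym2 V) (X : Finset V) :
    cut ends X ⊆ X.biUnion (incidentEdges ends) := by
  intro f hf
  obtain ⟨x, hx, y, -, hxy⟩ := mem_cut.1 hf
  exact mem_biUnion.2 ⟨x, hx, by simp [mem_incidentEdges, hxy]⟩

lemma IsCubic.card_incidentEdges (hc : IsCubic ends) (v : V) : #(incidentEdges ends v) = 3 := by
  rw [← hc v, ← Set.ncard_coe_finset]
  simp [incidentEdges]

lemma odd_card_filter_mem_ends_iff [DecidableEq V] {f : E} (hf : ¬ (ends f).IsDiag) :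
    Odd #{x ∈ X | x ∈ ends f} ↔ f ∈ cut ends X := by
  induction hpq : ends f with | _ p q
  have hne : p ≠ q := by simpa [hpq] using hf
  rw [mem_cut_iff_of_ends_eq hpq]
  by_cases hp : p ∈ X <;> by_cases hq : q ∈ X <;> simp [filter_or, filter_eq', hp, hq, hne]

lemma odd_card_cut_iff (hl : NoLoops ends) :
    Odd #(cut ends X) ↔ Odd (∑ v ∈ X, #(incidentEdges ends v)) := by
  classical
  have double_count : ∑ v ∈ X, #(incidentEdges ends v) = ∑ f, #{x ∈ X | x ∈ ends f} := by
    simp only [incidentEdges]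
    exact sum_card_bipartiteAbove_eq_sum_card_bipartiteBelow _
  rw [double_count, odd_sum_iff_odd_card_odd]
  simp only [odd_card_filter_mem_ends_iff (hl _), filter_univ_mem]

lemma Reach.exists_mem_cut {F : Set E} {v w : V} (h : Reach ends F v w) (hv : v ∈ X)
    (hw : w ∉ X) : ∃ f ∈ cut ends X, f ∈ F := by
  induction h with
  | refl => exact absurd hv hw
  | @tail x y _ hxy ih =>
    by_cases hx : x ∈ X
    · obtain ⟨f, hfF, hf⟩ := hxy
      exact ⟨f, mem_cut.2 ⟨x, hx, y, hw, hf⟩, hfF⟩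
    · exact ih hx

lemma Bridgeless.card_cut_ne_one (hb : Bridgeless ends) : #(cut ends X) ≠ 1 := by
  intro hone
  obtain ⟨f, hf⟩ := card_eq_one.1 hone
  obtain ⟨x, hx, y, hy, hxy⟩ := mem_cut.1 (hf ▸ mem_singleton_self f)
  obtain ⟨g, hg, hgf⟩ := (hb f x y hxy).exists_mem_cut hx hy
  exact hgf (mem_singleton.1 (hf ▸ hg))

/-- Seymour's `r`-graphs: `r`-regular multigraphs in which every odd vertex set is left by at least
`r` edges. They are the generality in which the matching argument for cubic graphs works. -/
structure IsRGraph (ends : E → Sym2 V) (r : ℕ) : Prop where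
  card_incidentEdges : ∀ v, #(incidentEdges ends v) = r
  le_card_cut : ∀ X : Finset V, Odd #X → r ≤ #(cut ends X)

lemma IsCubic.isRGraph (hc : IsCubic ends) (hl : NoLoops ends) (hb : Bridgeless ends) :
    IsRGraph ends 3 where
  card_incidentEdges := hc.card_incidentEdges
  le_card_cut X hX := by
    have hodd : Odd #(cut ends X) := by
      rw [odd_card_cut_iff hl, sum_congr rfl fun v _ ↦ hc.card_incidentEdges v, sum_const,
        smul_eq_mul]
      exact hX.mul (by decide)
    have hne_one := hb.card_cut_ne_one (X := X)
    obtain ⟨k, hk⟩ := hodd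
    omega

namespace IsRGraph

lemma noLoops (h : IsRGraph ends r) : NoLoops ends := by
  classical
  intro e he
  obtain ⟨v, hv⟩ : ∃ v, ends e = s(v, v) := ⟨_, (Sym2.diag_diagElem he).symm⟩
  have hsub : cut ends {v} ⊆ incidentEdges ends v := by
    simpa using cut_subset_biUnion_incidentEdges ends {v}
  have hcut_eq : cut ends {v} = incidentEdges ends v :=
    eq_of_subset_of_card_le hsub (h.card_incidentEdges v ▸ h.le_card_cut {v} (by simp))
  have he_cut : e ∈ cut ends {v} := by simp [hcut_eq, mem_incidentEdges, hv]
  simp [mem_cut_iff_of_ends_eq hv] at he_cut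

lemma even_card [Fintype V] (h : IsRGraph ends r) (hr : 0 < r) : Even (Fintype.card V) := by
  by_contra hodd
  have hle := h.le_card_cut univ (Nat.not_even_iff_odd.1 hodd)
  have hcut : cut ends univ = ∅ := by simp [cut]
  rw [hcut, card_empty] at hle
  omega

lemma card_mul_le_card_cut (h : IsRGraph ends r) {𝒪 : Finset (Finset V)}
    (hS : OddSeparation (SimpleGraph.fromEdgeSet (Set.range ends)) S 𝒪) :
    #𝒪 * r ≤ #(cut ends S) := by
  classical
  have mem_of_edge : ∀ C ∈ 𝒪, ∀ f, ∀ x ∈ C, ∀ y ∉ C, ends f = s(x, y) → y ∈ S := by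
    intro C hC f x hx y hy hf
    exact hS.mem_of_adj C hC x hx y hy
      ((SimpleGraph.fromEdgeSet_adj _).2 ⟨⟨f, hf⟩, ne_of_mem_of_not_mem hx hy⟩)
  have hdisj : (𝒪 : Set (Finset V)).PairwiseDisjoint (cut ends) := by
    refine fun C hC D hD hCD ↦ disjoint_left.2 fun f hfC hfD ↦ ?_
    obtain ⟨x, hx, y, hy, hxy⟩ := mem_cut.1 hfC
    obtain ⟨x', hx', y', -, hxy'⟩ := mem_cut.1 hfD
    rcases Sym2.eq_iff.1 (hxy.symm.trans hxy') with ⟨rfl, -⟩ | ⟨-, rfl⟩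
    · exact disjoint_left.1 (hS.pairwiseDisjoint hC hD hCD) hx hx'
    · exact disjoint_left.1 (hS.disjoint D hD) hx' (mem_of_edge C hC f x hx y hy hxy)
  have hsub : 𝒪.biUnion (cut ends) ⊆ cut ends S := by
    refine biUnion_subset.2 fun C hC f hf ↦ ?_
    obtain ⟨x, hx, y, hy, hxy⟩ := mem_cut.1 hf
    exact mem_cut.2 ⟨y, mem_of_edge C hC f x hx y hy hxy, x, disjoint_left.1 (hS.disjoint C hC) hx,
      hxy.trans Sym2.eq_swap⟩
  calc #𝒪 * r ≤ ∑ C ∈ 𝒪, #(cut ends C) :=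
        card_nsmul_le_sum _ _ _ fun C hC ↦ h.le_card_cut C (hS.odd_card C hC)
    _ = #(𝒪.biUnion (cut ends)) := (card_biUnion hdisj).symm
    _ ≤ #(cut ends S) := card_le_card hsub

lemma card_cut_lt_of_ends_eq (h : IsRGraph ends r) {e : E} {a b : V} (he : ends e = s(a, b))
    (ha : a ∈ S) (hb : b ∈ S) : #(cut ends S) < #S * r := by
  classical
  have he_inc : e ∈ S.biUnion (incidentEdges ends) :=
    mem_biUnion.2 ⟨a, ha, by simp [mem_incidentEdges, he]⟩
  calc #(cut ends S) < #(S.biUnion (incidentEdges ends)) :=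
        card_lt_card <| (cut_subset_biUnion_incidentEdges ends S).ssubset_of_mem_notMem he_inc
          (by simp [mem_cut_iff_of_ends_eq he, ha, hb])
    _ ≤ #S * r := card_biUnion_le_card_mul _ _ _ fun v _ ↦ (h.card_incidentEdges v).le

end IsRGraph

end Multigraph

end Mg

open Mg Finset in
theorem stmt0_general {V E : Type} [Finite V] [Fintype E] {ends : E → Sym2 V} {r : ℕ}
    (h : IsRGraph ends r) (e : E) : ∃ M : Set E, IsPerfectMatching ends M ∧ e ∈ M := by
  cases nonempty_fintype V
  induction he : ends e with | _ a b
  have hne : a ≠ b := fun hab ↦ h.noLoops e (by simp [he, hab])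
  have hr : 0 < r := by
    rw [← h.card_incidentEdges a]
    exact card_pos.2 ⟨e, by simp [mem_incidentEdges, he]⟩
  have hab : (SimpleGraph.fromEdgeSet (Set.range ends)).Adj a b :=
    (SimpleGraph.fromEdgeSet_adj _).2 ⟨⟨e, he⟩, hne⟩
  obtain ⟨N, hN, hNab⟩ := exists_isPerfectMatching_adj_of_oddSeparation (h.even_card hr) hab
    fun S 𝒪 hS ha hb ↦ lt_of_mul_lt_mul_right
      ((h.card_mul_le_card_cut hS).trans_lt (h.card_cut_lt_of_ends_eq he ha hb)) r.zero_le
  exact exists_isPerfectMatching_of_fromEdgeSet hN (he ▸ hNab)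

theorem stmt0 {V E : Type} [Fintype V] [Fintype E] (ends : E → Sym2 V)
    (hl : Mg.NoLoops ends) (hc : Mg.IsCubic ends) (hb : Mg.Bridgeless ends) :
    ∀ e : E, ∃ M : Set E, Mg.IsPerfectMatching ends M ∧ e ∈ M :=
  stmt0_general (hc.isRGraph hl hb)
end

section
/- Let G be a connected bridgeless cubic graph in which every 2-factor consists only of cycles of length five. Then G contains no cycle of length two (i.e., G has no multiple edges). -/
/-!
In a bridgeless cubic graph any two edges lie in a common 2-factor. Applied to two parallel edges
this yields a 2-factor having their two ends as a component, so not all 2-factors consist of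
5-cycles.

Equivalently, some perfect matching avoids two given edges `e` and `f`, which follows from Tutte's
theorem: parity and the absence of bridges force at least three edges out of every odd component of
`G - e - f - S`. At most `3|S|` such edges end in `S`, and `e`, `f` are counted at most twice each,
so the number `q` of odd components satisfies `3q ≤ 3|S| + 4`. As `q` and `|S|` have the same
parity, `q ≤ |S|`.
-/

namespace Mg

open scoped symmDiff

variable {V E : Type} {ends : E → Sym2 V}

/-- The edge boundary (coboundary) of a vertex set `T`: the edges with one end in `T` and the other
end outside `T`. Its size is what the counting for Tutte's theorem estimates. -/
def edgeBoundary (ends : E → Sym2 V) (T : Set V) : Set E :=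
  {e | ∃ x ∈ T, ∃ y ∉ T, ends e = s(x, y)}

lemma edgeBoundary_empty : edgeBoundary ends ∅ = ∅ := by
  simp [edgeBoundary]

lemma edgeBoundary_univ : edgeBoundary ends Set.univ = ∅ := by
  simp [edgeBoundary]

lemma exists_mem_of_mem_edgeBoundary {T : Set V} {e : E} (he : e ∈ edgeBoundary ends T) :
    ∃ x ∈ T, x ∈ ends e := by
  obtain ⟨x, hx, y, -, hxy⟩ := he
  exact ⟨x, hx, hxy ▸ Sym2.mem_mk_left x y⟩

lemma mem_edgeBoundary_iff_of_ends_eq {T : Set V} {e : E} {x y : V} (h : ends e = s(x, y)) :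
    e ∈ edgeBoundary ends T ↔ Xor (x ∈ T) (y ∈ T) := by
  constructor
  · rintro ⟨a, ha, b, hb, hab⟩
    rcases Sym2.eq_iff.1 (h.symm.trans hab) with ⟨rfl, rfl⟩ | ⟨rfl, rfl⟩
    exacts [.inl ⟨ha, hb⟩, .inr ⟨ha, hb⟩]
  · rintro (⟨hx, hy⟩ | ⟨hy, hx⟩)
    exacts [⟨x, hx, y, hy, h⟩, ⟨y, hy, x, hx, h.trans Sym2.eq_swap⟩]

lemma edgeBoundary_insert (hl : NoLoops ends) {T : Set V} {v : V} (hv : v ∉ T) :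
    edgeBoundary ends (insert v T) = edgeBoundary ends T ∆ {e | v ∈ ends e} := by
  ext e
  induction h : ends e using Sym2.ind with
  | _ x y =>
    have hxy : x ≠ y := by simpa [h] using hl e
    simp only [Set.mem_symmDiff, mem_edgeBoundary_iff_of_ends_eq h, Set.mem_ofPred_eq, h,
      Sym2.mem_iff, Set.mem_insert_iff, Xor]
    grind

lemma odd_ncard_symmDiff {α : Type*} {s t : Set α} (hs : s.Finite) (ht : t.Finite) :
    Odd (s ∆ t).ncard ↔ Odd (s.ncard + t.ncard) := by
  have hst : (s ∆ t).ncard = (s \ t).ncard + (t \ s).ncard :=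
    Set.ncard_union_eq disjoint_sdiff_sdiff hs.sdiff ht.sdiff
  have hs' := Set.ncard_inter_add_ncard_sdiff_eq_ncard s t hs
  have ht' := Set.ncard_inter_add_ncard_sdiff_eq_ncard t s ht
  rw [Set.inter_comm] at ht'
  simp only [Nat.odd_iff]
  omega

lemma odd_ncard_edgeBoundary_iff_odd_sum [Finite E] (hl : NoLoops ends) (T : Finset V) :
    Odd (edgeBoundary ends (T : Set V)).ncard ↔ Odd (∑ v ∈ T, {e | v ∈ ends e}.ncard) := by
  classical
  induction T using Finset.induction_on with
  | empty => simp [edgeBoundary_empty]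
  | insert v T hv ih =>
    rw [Finset.coe_insert, edgeBoundary_insert hl (by simpa using hv),
      odd_ncard_symmDiff (Set.toFinite _) (Set.toFinite _), Finset.sum_insert hv, add_comm,
      Nat.odd_add, Nat.odd_add, ← Nat.not_odd_iff_even, ← Nat.not_odd_iff_even, ih]

lemma Reach.exists_mem_edgeBoundary {F : Set E} {T : Set V} {x y : V} (h : Reach ends F x y)
    (hx : x ∈ T) (hy : y ∉ T) : ∃ e ∈ F, e ∈ edgeBoundary ends T := by
  induction h with
  | refl => exact absurd hx hy
  | @tail a b _ hab ih =>
    by_cases ha : a ∈ T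
    · obtain ⟨e, heF, he⟩ := hab
      exact ⟨e, heF, a, ha, b, hy, he⟩
    · exact ih ha

lemma Bridgeless.ncard_edgeBoundary_ne_one (hb : Bridgeless ends) (T : Set V) :
    (edgeBoundary ends T).ncard ≠ 1 := by
  intro h
  obtain ⟨e, he⟩ := Set.ncard_eq_one.1 h
  obtain ⟨x, hx, y, hy, hxy⟩ : e ∈ edgeBoundary ends T := he ▸ Set.mem_singleton e
  obtain ⟨f, hfe, hf⟩ := (hb e x y hxy).exists_mem_edgeBoundary hx hy
  exact hfe (he ▸ hf : f ∈ ({e} : Set E))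

section Cubic

variable [Finite V] [Finite E]

lemma IsCubic.odd_ncard_edgeBoundary_iff (hl : NoLoops ends) (hc : IsCubic ends) (T : Set V) :
    Odd (edgeBoundary ends T).ncard ↔ Odd T.ncard := by
  lift T to Finset V using T.toFinite
  rw [odd_ncard_edgeBoundary_iff_odd_sum hl, Finset.sum_congr rfl fun v _ => hc v,
    Finset.sum_const, smul_eq_mul, Set.ncard_coe_finset, Nat.odd_mul]
  exact and_iff_left (by decide)

lemma IsCubic.even_card (hl : NoLoops ends) (hc : IsCubic ends) : Even (Nat.card V) := by
  rw [← Nat.not_odd_iff_even, ← Set.ncard_univ, ← hc.odd_ncard_edgeBoundary_iff hl,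
    edgeBoundary_univ, Set.ncard_empty]
  decide

lemma IsCubic.three_le_ncard_edgeBoundary (hl : NoLoops ends) (hc : IsCubic ends)
    (hb : Bridgeless ends) {T : Set V} (hT : Odd T.ncard) : 3 ≤ (edgeBoundary ends T).ncard := by
  obtain ⟨k, hk⟩ := (hc.odd_ncard_edgeBoundary_iff hl T).2 hT
  have := hb.ncard_edgeBoundary_ne_one T
  omega

lemma IsCubic.ncard_edgeBoundary_le (hc : IsCubic ends) (S : Set V) :
    (edgeBoundary ends S).ncard ≤ 3 * S.ncard := by
  lift S to Finset V using S.toFinite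
  have hsub : edgeBoundary ends S ⊆ ⋃ v ∈ S, {e | v ∈ ends e} := fun e he => by
    simpa using exists_mem_of_mem_edgeBoundary he
  calc (edgeBoundary ends S).ncard
      ≤ (⋃ v ∈ S, {e | v ∈ ends e}).ncard := Set.ncard_le_ncard hsub
    _ ≤ ∑ v ∈ S, {e | v ∈ ends e}.ncard := S.set_ncard_biUnion_le _
    _ = 3 * (S : Set V).ncard := by simp [hc _, mul_comm]

end Cubic

section DisjointFamily

variable {ι : Type*} {A : ι → Set V}

lemma sum_ncard_edgeBoundary_sdiff_le [Fintype ι] [Finite E]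
    (hA : Pairwise (Function.onFun Disjoint A)) {S : Set V} (hS : ∀ i, Disjoint (A i) S) {D : Set E}
    (hD : ∀ i, edgeBoundary ends (A i) \ D ⊆ edgeBoundary ends S) :
    ∑ i, (edgeBoundary ends (A i) \ D).ncard ≤ (edgeBoundary ends S).ncard := by
  have hdisj : Pairwise (Function.onFun Disjoint fun i => edgeBoundary ends (A i) \ D) := by
    intro i j hij
    refine Set.disjoint_left.2 fun e hei hej => ?_
    obtain ⟨x, hx, y, hy, hxy⟩ := hD i hei
    -- The end of `e` in `S` lies in no `A k`, so its other end lies in both `A i` and `A j`.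
    have other_end_mem (k) (hek : e ∈ edgeBoundary ends (A k)) : y ∈ A k := by
      obtain ⟨z, hz, hze⟩ := exists_mem_of_mem_edgeBoundary hek
      rcases Sym2.mem_iff.1 (hxy ▸ hze) with rfl | rfl
      exacts [absurd hx (Set.disjoint_left.1 (hS k) hz), hz]
    exact Set.disjoint_left.1 (hA hij) (other_end_mem i hei.1) (other_end_mem j hej.1)
  rw [← finsum_eq_sum_of_fintype, ← Set.ncard_iUnion_of_finite (fun _ => Set.toFinite _) hdisj]
  exact Set.ncard_le_ncard (Set.iUnion_subset hD)

lemma ncard_setOf_mem_edgeBoundary_le_two (hA : Pairwise (Function.onFun Disjoint A)) (e : E) :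
    {i | e ∈ edgeBoundary ends (A i)}.ncard ≤ 2 := by
  have subsingleton (v : V) : {i | v ∈ A i}.Subsingleton := fun i hi j hj =>
    by_contra fun hij => Set.disjoint_left.1 (hA hij) hi hj
  have ncard_le_one (v : V) : {i | v ∈ A i}.ncard ≤ 1 :=
    (Set.ncard_le_one (subsingleton v).finite).2 (subsingleton v)
  induction h : ends e using Sym2.ind with
  | _ x y =>
    calc {i | e ∈ edgeBoundary ends (A i)}.ncard
        ≤ ({i | x ∈ A i} ∪ {i | y ∈ A i}).ncard := by
          refine Set.ncard_le_ncard (fun i hi => ?_)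
            ((subsingleton x).finite.union (subsingleton y).finite)
          obtain ⟨z, hz, hze⟩ := exists_mem_of_mem_edgeBoundary hi
          rcases Sym2.mem_iff.1 (h ▸ hze) with rfl | rfl
          exacts [.inl hz, .inr hz]
      _ ≤ {i | x ∈ A i}.ncard + {i | y ∈ A i}.ncard := Set.ncard_union_le _ _
      _ ≤ 2 := add_le_add (ncard_le_one x) (ncard_le_one y)

lemma sum_ncard_edgeBoundary_inter_le [Fintype ι] (hA : Pairwise (Function.onFun Disjoint A))
    (D : Finset E) :
    ∑ i, (edgeBoundary ends (A i) ∩ D).ncard ≤ 2 * D.card := by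
  classical
  calc ∑ i, (edgeBoundary ends (A i) ∩ D).ncard
      = ∑ i, (D.filter fun e => e ∈ edgeBoundary ends (A i)).card := by
        simp only [← Set.ncard_coe_finset, Finset.coe_filter, and_comm, Set.inter_def,
          Finset.mem_coe]
    _ = ∑ e ∈ D, {i | e ∈ edgeBoundary ends (A i)}.ncard := by
        simp only [← Finset.coe_filter_univ, Set.ncard_coe_finset]
        exact Finset.sum_card_bipartiteAbove_eq_sum_card_bipartiteBelow _
    _ ≤ 2 * D.card := by
        rw [mul_comm]
        exact Finset.sum_le_card_nsmul _ _ _ fun e _ => ncard_setOf_mem_edgeBoundary_le_two hA e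

lemma IsCubic.three_mul_card_le_of_odd_of_disjoint [Fintype ι] [Finite V] [Finite E]
    (hl : NoLoops ends) (hc : IsCubic ends) (hb : Bridgeless ends) (hodd : ∀ i, Odd (A i).ncard)
    (hA : Pairwise (Function.onFun Disjoint A)) {S : Set V} (hS : ∀ i, Disjoint (A i) S)
    {D : Finset E} (hD : ∀ i, edgeBoundary ends (A i) \ D ⊆ edgeBoundary ends S) :
    3 * Fintype.card ι ≤ 3 * S.ncard + 2 * D.card := by
  calc 3 * Fintype.card ι
      = ∑ _i : ι, 3 := by simp [mul_comm]
    _ ≤ ∑ i, (edgeBoundary ends (A i)).ncard :=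
        Finset.sum_le_sum fun i _ => hc.three_le_ncard_edgeBoundary hl hb (hodd i)
    _ = ∑ i, (edgeBoundary ends (A i) \ D).ncard + ∑ i, (edgeBoundary ends (A i) ∩ D).ncard := by
        rw [← Finset.sum_add_distrib]
        refine Finset.sum_congr rfl fun i _ => ?_
        rw [add_comm, Set.ncard_inter_add_ncard_sdiff_eq_ncard _ _ (Set.toFinite _)]
    _ ≤ (edgeBoundary ends S).ncard + 2 * D.card :=
        add_le_add (sum_ncard_edgeBoundary_sdiff_le hA hS hD) (sum_ncard_edgeBoundary_inter_le hA D)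
    _ ≤ 3 * S.ncard + 2 * D.card := Nat.add_le_add_right (hc.ncard_edgeBoundary_le S) _

end DisjointFamily

/-- The simple graph underlying the spanning subgraph with edge set `F`: parallel edges are
identified and loops are dropped. It makes Mathlib's form of Tutte's theorem applicable. -/
def underlyingGraph (ends : E → Sym2 V) (F : Set E) : SimpleGraph V :=
  SimpleGraph.fromEdgeSet (ends '' F)

lemma edgeBoundary_supp_sdiff_subset {D : Set E} {S : Set V}
    (K : ((⊤ : (underlyingGraph ends Dᶜ).Subgraph).deleteVerts S).coe.ConnectedComponent) :
    edgeBoundary ends (Subtype.val '' K.supp) \ D ⊆ edgeBoundary ends S := by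
  rintro e ⟨⟨_, ⟨x, hx, rfl⟩, y, hy, hxy⟩, heD⟩
  have hxS : x.1 ∉ S := x.2.2
  by_cases hyS : y ∈ S
  · exact ⟨y, hyS, x, hxS, hxy.trans Sym2.eq_swap⟩
  have hne : x.1 ≠ y := fun h => hy ⟨x, hx, h⟩
  have hadj : (underlyingGraph ends Dᶜ).Adj x y := ⟨⟨e, heD, hxy⟩, hne⟩
  refine absurd ⟨⟨y, by simpa using hyS⟩, K.mem_supp_of_adj_mem_supp hx ?_, rfl⟩ hy
  simp [hadj, hxS, hyS]

lemma IsCubic.three_mul_ncard_oddComponents_le [Finite V] [Finite E] (hl : NoLoops ends)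
    (hc : IsCubic ends) (hb : Bridgeless ends) (D : Finset E) (S : Set V) :
    3 * ((⊤ : (underlyingGraph ends (D : Set E)ᶜ).Subgraph).deleteVerts S).coe.oddComponents.ncard
      ≤ 3 * S.ncard + 2 * D.card := by
  set Q := ((⊤ : (underlyingGraph ends (D : Set E)ᶜ).Subgraph).deleteVerts S).coe.oddComponents
  have := Fintype.ofFinite Q
  rw [← Nat.card_coe_set_eq, Nat.card_eq_fintype_card]
  refine hc.three_mul_card_le_of_odd_of_disjoint hl hb (A := fun K => Subtype.val '' K.1.supp)
    ?_ ?_ ?_ fun K => edgeBoundary_supp_sdiff_subset K.1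
  · intro K
    rw [Set.ncard_image_of_injective _ Subtype.val_injective]
    exact K.2
  · intro K L hKL
    exact (Set.disjoint_image_iff Subtype.val_injective).2
      (SimpleGraph.pairwise_disjoint_supp_connectedComponent _ (Subtype.coe_ne_coe.2 hKL))
  · intro K
    refine Set.disjoint_left.2 ?_
    rintro _ ⟨x, -, rfl⟩
    exact x.2.2

lemma odd_ncard_oddComponents_deleteVerts_iff [Finite V] (hV : Even (Nat.card V))
    (H : SimpleGraph V) (S : Set V) :
    Odd ((⊤ : H.Subgraph).deleteVerts S).coe.oddComponents.ncard ↔ Odd S.ncard := by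
  have hverts : ((⊤ : H.Subgraph).deleteVerts S).verts = Sᶜ := by ext; simp
  rw [SimpleGraph.odd_ncard_oddComponents, Nat.card_coe_set_eq, hverts,
    ← Nat.not_even_iff_odd, Set.even_ncard_compl_iff hV, Nat.not_even_iff_odd]

lemma exists_isPerfectMatching_subset {F : Set E}
    {M : (underlyingGraph ends F).Subgraph} (hM : M.IsPerfectMatching) :
    ∃ N ⊆ F, IsPerfectMatching ends N := by
  have hsurj : Set.SurjOn ends F M.edgeSet := fun s hs =>
    (SimpleGraph.edgeSet_fromEdgeSet (ends '' F) ▸ M.edgeSet_subset hs).1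
  obtain ⟨N, hNF, hN⟩ := hsurj.exists_bijOn_subset
  refine ⟨N, hNF, fun v => ?_⟩
  obtain ⟨w, hw, huniq⟩ := SimpleGraph.Subgraph.isPerfectMatching_iff.1 hM v
  obtain ⟨e, heN, he⟩ := hN.surjOn (SimpleGraph.Subgraph.mem_edgeSet.2 hw)
  refine ⟨e, ⟨heN, he ▸ Sym2.mem_mk_left v w⟩, fun f ⟨hfN, hvf⟩ => hN.injOn hfN heN ?_⟩
  obtain ⟨z, hz⟩ := Sym2.mem_iff_exists.1 hvf
  have hvz : M.Adj v z := SimpleGraph.Subgraph.mem_edgeSet.1 (hz ▸ hN.mapsTo hfN)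
  rw [hz, he, huniq z hvz]

/-- A case of a theorem of Plesník: an `r`-regular `(r - 1)`-edge-connected graph of even order has
a perfect matching avoiding any `r - 1` prescribed edges. -/
theorem IsCubic.exists_isPerfectMatching_disjoint [Finite V] [Finite E] (hl : NoLoops ends)
    (hc : IsCubic ends) (hb : Bridgeless ends) {D : Finset E} (hD : D.card ≤ 2) :
    ∃ M : Set E, IsPerfectMatching ends M ∧ Disjoint M D := by
  have hTutte : ∀ S, ¬ (underlyingGraph ends (D : Set E)ᶜ).IsTutteViolator S := by
    intro S hS
    have hcount := hc.three_mul_ncard_oddComponents_le hl hb D S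
    have hparity := odd_ncard_oddComponents_deleteVerts_iff (hc.even_card hl)
      (underlyingGraph ends (D : Set E)ᶜ) S
    rw [SimpleGraph.IsTutteViolator] at hS
    simp only [Nat.odd_iff] at hparity
    omega
  obtain ⟨M, hM⟩ := SimpleGraph.tutte.2 hTutte
  obtain ⟨N, hND, hN⟩ := exists_isPerfectMatching_subset hM
  exact ⟨N, hN, Set.disjoint_left.2 hND⟩

lemma IsPerfectMatching.isTwoFactor_compl (hc : IsCubic ends) {M : Set E}
    (hM : IsPerfectMatching ends M) : IsTwoFactor ends Mᶜ := by
  intro v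
  obtain ⟨e, ⟨heM, hve⟩, huniq⟩ := hM v
  have hdiff : {f | f ∈ Mᶜ ∧ v ∈ ends f} = {f | v ∈ ends f} \ {e} := by
    ext f
    exact ⟨fun ⟨hfM, hvf⟩ => ⟨hvf, fun hfe => hfM (hfe ▸ heM)⟩,
      fun ⟨hvf, hfe⟩ => ⟨fun hfM => hfe (huniq f ⟨hfM, hvf⟩), hvf⟩⟩
  have hmem : e ∈ {f | v ∈ ends f} := hve
  rw [hdiff, Set.ncard_sdiff_singleton_of_mem hmem, hc v]

theorem IsCubic.exists_isTwoFactor_superset [Finite V] [Finite E] (hl : NoLoops ends)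
    (hc : IsCubic ends) (hb : Bridgeless ends) {D : Finset E} (hD : D.card ≤ 2) :
    ∃ F : Set E, IsTwoFactor ends F ∧ ↑D ⊆ F := by
  obtain ⟨M, hM, hMD⟩ := hc.exists_isPerfectMatching_disjoint hl hb hD
  exact ⟨Mᶜ, hM.isTwoFactor_compl hc, hMD.symm.subset_compl_right⟩

lemma HasCycle.exists_parallel (h : HasCycle ends 2) :
    ∃ (x y : V) (e f : E), x ≠ y ∧ e ≠ f ∧ ends e = s(x, y) ∧ ends f = s(x, y) := by
  obtain ⟨c, f, hc, hf, hcf⟩ := h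
  refine ⟨c 0, c 1, f 0, f 1, hc.ne (by decide), hf.ne (by decide), hcf 0, ?_⟩
  exact (hcf 1).trans Sym2.eq_swap

lemma IsTwoFactor.component_eq_pair {F : Set E} (hF : IsTwoFactor ends F) {x y : V} {e f : E}
    (hef : e ≠ f) (he : ends e = s(x, y)) (hf : ends f = s(x, y)) (heF : e ∈ F) (hfF : f ∈ F) :
    component ends F x = {x, y} := by
  have ends_eq {v : V} (hv : v ∈ s(x, y)) {g : E} (hg : g ∈ F) (hvg : v ∈ ends g) :
      ends g = s(x, y) := by
    have hsub : {e, f} ⊆ {g | g ∈ F ∧ v ∈ ends g} := by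
      rintro _ (rfl | rfl)
      exacts [⟨heF, he ▸ hv⟩, ⟨hfF, hf ▸ hv⟩]
    have heq := Set.eq_of_subset_of_ncard_le hsub (by rw [hF v, Set.ncard_pair hef])
      (Set.finite_of_ncard_ne_zero (by simp [hF v]))
    rcases heq.ge ⟨hg, hvg⟩ with rfl | rfl
    exacts [he, hf]
  refine Set.Subset.antisymm (fun w hw => by_contra fun hwxy => ?_) ?_
  · obtain ⟨g, hg, a, ha, b, hb, hab⟩ := hw.exists_mem_edgeBoundary (Set.mem_insert x {y}) hwxy
    have hgxy := ends_eq (Sym2.mem_iff.2 ha) hg (hab ▸ Sym2.mem_mk_left a b)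
    exact hb (Sym2.mem_iff.1 (hgxy ▸ hab ▸ Sym2.mem_mk_right a b))
  · rintro _ (rfl | rfl)
    exacts [.refl, .single ⟨e, heF, he⟩]

end Mg

theorem stmt3_general {V E : Type} [Finite V] [Finite E] (ends : E → Sym2 V)
    (hl : Mg.NoLoops ends) (hc : Mg.IsCubic ends) (hb : Mg.Bridgeless ends)
    (h2 : ∀ F : Set E, Mg.IsTwoFactor ends F → ∀ v, (Mg.component ends F v).ncard ≠ 2) :
    ¬ Mg.HasCycle ends 2 := by
  classical
  intro hcycle
  obtain ⟨x, y, e, f, hxy, hef, he, hf⟩ := hcycle.exists_parallel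
  obtain ⟨F, hF, hefF⟩ :=
    hc.exists_isTwoFactor_superset hl hb (Finset.card_le_two (a := e) (b := f))
  have hcomp := hF.component_eq_pair hef he hf (hefF (by simp)) (hefF (by simp))
  exact h2 F hF x (by rw [hcomp, Set.ncard_pair hxy])

theorem stmt3 {V E : Type} [Fintype V] [Fintype E] (ends : E → Sym2 V)
    (hl : Mg.NoLoops ends) (hc : Mg.IsCubic ends) (hb : Mg.Bridgeless ends)
    (hconn : Mg.Connected ends) (h5 : Mg.TwoFactorsAllC5 ends) :
    ¬ Mg.HasCycle ends 2 :=
  stmt3_general ends hl hc hb fun F hF v => by simp [h5 F hF v]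
end

section
/- Let G be a connected bridgeless cubic graph in which every 2-factor consists only of 5-cycles. Then G is 3-edge-connected. -/
/-!
By Tutte's theorem every edge of an `r`-graph lies in a perfect matching, so in a bridgeless cubic
graph every edge can be avoided by a 2-factor and, being adjacent to another edge, also be covered
by one. A 2-factor meets every edge cut in an even number of edges. Suppose that the edge cut of
`X` contains `e` and is contained in `{e, e'}`. A 2-factor avoiding `e` then does not cross the cut
at all, so `X` is a union of 5-cycles and 5 divides `|X|`. In a 2-factor containing `e`, let `C` be
the 5-cycle through `e`; the other cycles do not cross the cut, so 5 divides `|X \ C|`. Hence 5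
divides `|X ∩ C|`, although `X ∩ C` is a nonempty proper subset of `C`. The same argument applies
to the `k`-factors of a `(k + 1)`-graph when `k` is even and positive, with any number in place
of 5.
-/

namespace Mg

open scoped Finset

section Definitions

variable {V E : Type} (ends : E → Sym2 V)

/-- The edges with one end in `X` and the other outside `X`. -/
def edgeCut (X : Set V) : Set E :=
  {e | ∃ a ∈ X, ∃ b ∉ X, ends e = s(a, b)}

/-- The edges of the subgraph induced on `X`, that is, those with both ends in `X`. -/
def inducedEdges (X : Set V) : Set E :=
  {e | ∀ v ∈ ends e, v ∈ X}

/-- A `k`-factor, given by its edge set; for `k = 2` this is `IsTwoFactor`. -/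
def IsFactor (k : ℕ) (F : Set E) : Prop :=
  ∀ v, {e | e ∈ F ∧ v ∈ ends e}.ncard = k

/-- An `r`-graph in the sense of Seymour: a loopless `r`-regular multigraph in which at least `r`
edges leave every set of odd cardinality. -/
structure IsRGraph_s8 (r : ℕ) : Prop where
  noLoops : NoLoops ends
  isFactor_univ : IsFactor ends r Set.univ
  le_ncard_edgeCut : ∀ X : Set V, Odd X.ncard → r ≤ (edgeCut ends X).ncard

/-- Every component of every `k`-factor has exactly `n` vertices; for `k = 2` and `n = 5` this is
`TwoFactorsAllC5`. -/
def FactorComponentsHaveCard (k n : ℕ) : Prop :=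
  ∀ F : Set E, IsFactor ends k F → ∀ v, (component ends F v).ncard = n

/-- The simple graph obtained by identifying parallel edges and deleting loops. -/
def underlying : SimpleGraph V :=
  SimpleGraph.fromEdgeSet (Set.range ends)

end Definitions

variable {V E : Type} {ends : E → Sym2 V} {F M : Set E} {X C : Set V} {e : E} {a b v w : V}
  {k n r : ℕ}

/-! ### Edge cuts and reachability -/

lemma exists_ends_eq (ends : E → Sym2 V) (e : E) : ∃ a b, ends e = s(a, b) :=
  (ends e).ind fun a b ↦ ⟨a, b, rfl⟩

lemma mem_edgeCut_iff (he : ends e = s(a, b)) :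
    e ∈ edgeCut ends X ↔ a ∈ X ∧ b ∉ X ∨ b ∈ X ∧ a ∉ X := by
  simp only [edgeCut, Set.mem_ofPred_eq, he, Sym2.eq_iff]
  grind

lemma mem_inducedEdges_iff (he : ends e = s(a, b)) :
    e ∈ inducedEdges ends X ↔ a ∈ X ∧ b ∈ X := by
  simp [inducedEdges, he]

lemma edgeCut_compl (X : Set V) : edgeCut ends Xᶜ = edgeCut ends X := by
  ext e
  obtain ⟨a, b, he⟩ := exists_ends_eq ends e
  simp only [mem_edgeCut_iff he, Set.mem_compl_iff]
  tauto

lemma edgeCut_univ : edgeCut ends Set.univ = ∅ := by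
  simp [edgeCut]

lemma Reach.symm (h : Reach ends F v w) : Reach ends F w v :=
  have : Std.Symm fun a b ↦ ∃ e ∈ F, ends e = s(a, b) :=
    ⟨fun _ _ ⟨e, heF, he⟩ ↦ ⟨e, heF, he.trans Sym2.eq_swap⟩⟩
  Relation.ReflTransGen.stdSymm.symm _ _ h

lemma component_eq_of_mem (h : w ∈ component ends F v) :
    component ends F w = component ends F v :=
  Set.ext fun _ ↦ ⟨fun hx ↦ Relation.ReflTransGen.trans h hx,
    fun hx ↦ Relation.ReflTransGen.trans (Reach.symm h) hx⟩

lemma mem_component_self (F : Set E) (v : V) : v ∈ component ends F v :=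
  Relation.ReflTransGen.refl

lemma mem_component_of_edge (heF : e ∈ F) (he : ends e = s(a, b))
    (ha : a ∈ component ends F v) : b ∈ component ends F v :=
  Relation.ReflTransGen.tail ha ⟨e, heF, he⟩

lemma disjoint_edgeCut_component (F : Set E) (v : V) :
    Disjoint F (edgeCut ends (component ends F v)) :=
  Set.disjoint_left.2 fun _ heF ⟨_, ha, _, hb, he⟩ ↦ hb (mem_component_of_edge heF he ha)

lemma Reach.inter_edgeCut_nonempty (h : Reach ends F v w) (hv : v ∈ X) (hw : w ∉ X) :
    (F ∩ edgeCut ends X).Nonempty := by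
  induction h with
  | refl => exact absurd hv hw
  | @tail b c _ hbc ih =>
    by_cases hb : b ∈ X
    · obtain ⟨e, heF, he⟩ := hbc
      exact ⟨e, heF, b, hb, c, hw, he⟩
    · exact ih hb

lemma reach_of_forall_inter_edgeCut_nonempty
    (h : ∀ X : Set V, v ∈ X → w ∉ X → (F ∩ edgeCut ends X).Nonempty) : Reach ends F v w := by
  by_contra hw
  exact Set.not_disjoint_iff_nonempty_inter.2 (h _ (mem_component_self F v) hw)
    (disjoint_edgeCut_component F v)

lemma component_subset (hX : Disjoint F (edgeCut ends X)) (hv : v ∈ X) :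
    component ends F v ⊆ X := by
  intro w hw
  by_contra hwX
  exact Set.not_disjoint_iff_nonempty_inter.2 (Reach.inter_edgeCut_nonempty hw hv hwX) hX

lemma dvd_ncard_of_disjoint_edgeCut [Finite V] (hn : ∀ v, n ∣ (component ends F v).ncard)
    (hX : Disjoint F (edgeCut ends X)) : n ∣ X.ncard := by
  classical
  have := Fintype.ofFinite V
  rw [Set.ncard_eq_toFinset_card', Finset.card_eq_sum_card_image (component ends F)]
  refine Finset.dvd_sum fun C hC ↦ ?_
  obtain ⟨v, hv, rfl⟩ := Finset.mem_image.1 hC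
  have fiber_eq : ({w ∈ X.toFinset | component ends F w = component ends F v} : Finset V) =
      (component ends F v).toFinset := by
    ext w
    simp only [Finset.mem_filter, Set.mem_toFinset]
    refine ⟨fun hw ↦ hw.2 ▸ mem_component_self F w, fun hw ↦ ⟨?_, component_eq_of_mem hw⟩⟩
    exact component_subset hX (Set.mem_toFinset.1 hv) hw
  rw [fiber_eq, ← Set.ncard_eq_toFinset_card']
  exact hn v

lemma inter_edgeCut_sdiff_subset (hC : Disjoint F (edgeCut ends C)) :
    F ∩ edgeCut ends (X \ C) ⊆ edgeCut ends X ∩ inducedEdges ends Cᶜ := by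
  rintro e ⟨heF, heX⟩
  have heC := Set.disjoint_left.1 hC heF
  obtain ⟨a, b, he⟩ := exists_ends_eq ends e
  simp only [Set.mem_inter_iff, mem_edgeCut_iff he, mem_inducedEdges_iff he,
    Set.mem_sdiff, Set.mem_compl_iff] at heX heC ⊢
  tauto

/-! ### Handshaking -/

open scoped Classical in
lemma ncard_inter_ends (he : ¬ (ends e).IsDiag) (X : Set V) :
    {v | v ∈ X ∧ v ∈ ends e}.ncard =
      2 * (if e ∈ inducedEdges ends X then 1 else 0) + (if e ∈ edgeCut ends X then 1 else 0) := by
  obtain ⟨a, b, hab⟩ := exists_ends_eq ends e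
  have hne : a ≠ b := by simpa [hab] using he
  have hset : {v | v ∈ X ∧ v ∈ ends e} = (({a, b} : Finset V).filter (· ∈ X) : Set V) := by
    ext v
    simp [hab, and_comm]
  rw [hset, Set.ncard_coe_finset, mem_inducedEdges_iff hab, mem_edgeCut_iff hab]
  by_cases ha : a ∈ X <;> by_cases hb : b ∈ X <;>
    simp [Finset.filter_insert, Finset.filter_singleton, ha, hb, hne]

theorem IsFactor.mul_ncard [Finite V] [Finite E] (hF : IsFactor ends k F) (hl : NoLoops ends)
    (X : Set V) :
    k * X.ncard = 2 * (F ∩ inducedEdges ends X).ncard + (F ∩ edgeCut ends X).ncard := by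
  classical
  have := Fintype.ofFinite V
  have := Fintype.ofFinite E
  have incidences_at_vertex (v : V) : #{e ∈ F.toFinset | v ∈ ends e} = k := by
    rw [← hF v, ← Set.ncard_coe_finset]
    simp
  have incidences_at_edge (e : E) : #{v ∈ X.toFinset | v ∈ ends e} =
      2 * (if e ∈ inducedEdges ends X then 1 else 0) + (if e ∈ edgeCut ends X then 1 else 0) := by
    rw [← ncard_inter_ends (hl e), ← Set.ncard_coe_finset]
    simp
  have double_count := Finset.sum_card_bipartiteAbove_eq_sum_card_bipartiteBelow
    (fun (v : V) (e : E) ↦ v ∈ ends e) (s := X.toFinset) (t := F.toFinset)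
  have ncard_inter (A : Set E) : (F ∩ A).ncard = #{e ∈ F.toFinset | e ∈ A} := by
    rw [← Set.ncard_coe_finset, Finset.coe_filter]
    simp only [Set.mem_toFinset]
    rfl
  simp only [Finset.bipartiteAbove, Finset.bipartiteBelow, incidences_at_vertex,
    incidences_at_edge, Finset.sum_add_distrib, ← Finset.mul_sum, Finset.sum_boole,
    Finset.sum_const, smul_eq_mul, Nat.cast_id, ← Set.ncard_eq_toFinset_card',
    ← ncard_inter] at double_count
  rw [← double_count, mul_comm]

lemma IsFactor.disjoint_edgeCut_of_even [Finite V] [Finite E] (hF : IsFactor ends k F)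
    (hl : NoLoops ends) (hk : Even k) (h : F ∩ edgeCut ends X ⊆ {e}) :
    Disjoint F (edgeCut ends X) := by
  have handshake := hF.mul_ncard hl X
  have card_le_one := Set.ncard_le_ncard h
  rw [Set.ncard_singleton] at card_le_one
  obtain ⟨m, hm⟩ := hk.mul_right X.ncard
  rw [Set.disjoint_iff_inter_eq_empty, ← Set.ncard_eq_zero]
  lia

/-! ### Seymour's `r`-graphs -/

lemma Bridgeless.ncard_edgeCut_ne_one (hb : Bridgeless ends) (X : Set V) :
    (edgeCut ends X).ncard ≠ 1 := by
  intro h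
  obtain ⟨e, heX⟩ := Set.ncard_eq_one.1 h
  obtain ⟨a, ha, b, hbX, he⟩ : e ∈ edgeCut ends X := heX ▸ rfl
  obtain ⟨f, hfe, hfX⟩ := (hb e a b he).inter_edgeCut_nonempty ha hbX
  exact hfe (heX.subset hfX)

lemma IsCubic.isFactor_univ (hc : IsCubic ends) : IsFactor ends 3 Set.univ := fun v ↦ by
  simpa using hc v

theorem isRGraph_three_of_bridgeless [Finite V] [Finite E] (hl : NoLoops ends)
    (hc : IsCubic ends) (hb : Bridgeless ends) : IsRGraph_s8 ends 3 where
  noLoops := hl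
  isFactor_univ := hc.isFactor_univ
  le_ncard_edgeCut X hX := by
    have handshake := hc.isFactor_univ.mul_ncard hl X
    have ne_one := hb.ncard_edgeCut_ne_one X
    obtain ⟨m, hm⟩ := hX
    rw [Set.univ_inter, Set.univ_inter] at handshake
    lia

lemma IsRGraph_s8.even_card (hG : IsRGraph_s8 ends r) (hr : r ≠ 0) : Even (Nat.card V) := by
  by_contra hodd
  have := hG.le_ncard_edgeCut Set.univ (by simpa [Set.ncard_univ] using hodd)
  simp [edgeCut_univ, hr] at this

lemma IsRGraph_s8.ne_zero [Finite E] (hG : IsRGraph_s8 ends r) (e : E) : r ≠ 0 := by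
  obtain ⟨a, b, he⟩ := exists_ends_eq ends e
  rw [← hG.isFactor_univ a]
  exact Set.ncard_ne_zero_of_mem (a := e) ⟨trivial, he ▸ Sym2.mem_mk_left a b⟩

section OddComponents

variable {U : Type*} {K : SimpleGraph U}

lemma exists_notMem_range_of_mem_edgeCut_image_supp (f : K ↪g underlying ends)
    {c : K.ConnectedComponent} (he : e ∈ edgeCut ends (f '' c.supp)) :
    ∃ a ∈ f '' c.supp, ∃ b ∉ Set.range f, ends e = s(a, b) := by
  obtain ⟨_, ⟨x, hx, rfl⟩, b, hb, hab⟩ := he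
  refine ⟨f x, ⟨x, hx, rfl⟩, b, ?_, hab⟩
  rintro ⟨y, rfl⟩
  have hxy : K.Adj x y := f.map_adj_iff.1 ⟨⟨e, hab⟩, fun h ↦ hb (h ▸ ⟨x, hx, rfl⟩)⟩
  exact hb ⟨y, (c.mem_supp_congr_adj hxy).1 hx, rfl⟩

lemma edgeCut_image_supp_subset (f : K ↪g underlying ends) (c : K.ConnectedComponent) :
    edgeCut ends (f '' c.supp) ⊆ edgeCut ends (Set.range f)ᶜ := by
  intro e he
  obtain ⟨a, ha, b, hb, hab⟩ := exists_notMem_range_of_mem_edgeCut_image_supp f he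
  rw [edgeCut_compl]
  exact ⟨a, Set.image_subset_range _ _ ha, b, hb, hab⟩

lemma pairwise_disjoint_edgeCut_image_supp (f : K ↪g underlying ends) :
    Pairwise (Function.onFun Disjoint
      fun c : K.ConnectedComponent ↦ edgeCut ends (f '' c.supp)) := by
  refine fun c d hcd ↦ Set.disjoint_left.2 fun e hc hd ↦ ?_
  obtain ⟨_, ⟨x, hx, rfl⟩, b, -, he⟩ := exists_notMem_range_of_mem_edgeCut_image_supp f hc
  obtain ⟨_, ⟨y, hy, rfl⟩, b', hb', he'⟩ := exists_notMem_range_of_mem_edgeCut_image_supp f hd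
  obtain ⟨hxy, -⟩ | ⟨hxb, -⟩ := Sym2.eq_iff.1 (he.symm.trans he')
  · rw [← f.injective hxy] at hy
    exact hcd (hx.symm.trans hy)
  · exact hb' ⟨x, hxb⟩

theorem IsRGraph_s8.mul_ncard_oddComponents_add_two_le [Finite V] [Finite E]
    (hG : IsRGraph_s8 ends r) (f : K ↪g underlying ends) (he : e ∈ inducedEdges ends (Set.range f)ᶜ) :
    r * K.oddComponents.ncard + 2 ≤ r * (Set.range f)ᶜ.ncard := by
  have : Finite U := Finite.of_injective f f.injective
  have := Fintype.ofFinite K.oddComponents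
  have many_cut_edges : r * K.oddComponents.ncard ≤ (edgeCut ends (Set.range f)ᶜ).ncard :=
    calc r * K.oddComponents.ncard
        = ∑ _c : K.oddComponents, r := by
          rw [Finset.sum_const, Finset.card_univ, ← Nat.card_eq_fintype_card, Nat.card_coe_set_eq,
            smul_eq_mul, mul_comm]
      _ ≤ ∑ c : K.oddComponents, (edgeCut ends (f '' c.1.supp)).ncard := by
          refine Finset.sum_le_sum fun c _ ↦ hG.le_ncard_edgeCut _ ?_
          rw [Set.ncard_image_of_injective _ f.injective]
          exact c.2
      _ = (⋃ c : K.oddComponents, edgeCut ends (f '' c.1.supp)).ncard := by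
          have hdisj := (pairwise_disjoint_edgeCut_image_supp f).comp_of_injective
            (Subtype.val_injective (p := (· ∈ K.oddComponents)))
          rw [← finsum_eq_sum_of_fintype]
          exact (Set.ncard_iUnion_of_finite (fun _ ↦ Set.toFinite _) hdisj).symm
      _ ≤ (edgeCut ends (Set.range f)ᶜ).ncard :=
          Set.ncard_le_ncard (Set.iUnion_subset fun c ↦ edgeCut_image_supp_subset f c)
  have induced_ne_zero := Set.ncard_ne_zero_of_mem he
  have handshake := hG.isFactor_univ.mul_ncard hG.noLoops (Set.range f)ᶜ
  rw [Set.univ_inter, Set.univ_inter] at handshake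
  lia

end OddComponents

/-! ### Perfect matchings through a prescribed edge -/

section SimpleGraphs

variable {W : Type*} {G : SimpleGraph W}

/-- The inclusion into `G` of `G[A] - S`, where `G[A] - S` has the form in which it occurs in
`SimpleGraph.IsTutteViolator`. -/
def induceDeleteVertsEmbedding (G : SimpleGraph W) (A : Set W) (S : Set A) :
    ((⊤ : (G.induce A).Subgraph).deleteVerts S).coe ↪g G where
  toFun x := x.1.1
  inj' := Subtype.val_injective.comp Subtype.val_injective
  map_rel_iff' {x y} := by
    have hx := x.2.2
    have hy := y.2.2
    simp [hx, hy]

lemma compl_range_induceDeleteVertsEmbedding (A : Set W) (S : Set A) :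
    (Set.range (induceDeleteVertsEmbedding G A S))ᶜ = Aᶜ ∪ Subtype.val '' S := by
  ext w
  by_cases hw : w ∈ A <;> simp [induceDeleteVertsEmbedding, hw]

lemma ncard_compl_range_induceDeleteVertsEmbedding [Finite W] (A : Set W) (S : Set A) :
    (Set.range (induceDeleteVertsEmbedding G A S))ᶜ.ncard = Aᶜ.ncard + S.ncard := by
  have hdisj : Disjoint Aᶜ (Subtype.val '' S) :=
    disjoint_compl_left.mono_right (Subtype.coe_image_subset A S)
  rw [compl_range_induceDeleteVertsEmbedding, Set.ncard_union_eq hdisj,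
    Set.ncard_image_of_injective _ Subtype.val_injective]

lemma odd_ncard_oddComponents_iff_odd_compl_range {U : Type*} {K : SimpleGraph U} [Finite W]
    (hW : Even (Nat.card W)) (f : K ↪g G) :
    Odd K.oddComponents.ncard ↔ Odd (Set.range f)ᶜ.ncard := by
  have : Finite U := Finite.of_injective f f.injective
  have hcard := Set.ncard_add_ncard_compl (Set.range f)
  rw [SimpleGraph.odd_ncard_oddComponents, ← Set.ncard_univ U,
    ← Set.ncard_image_of_injective Set.univ f.injective, Set.image_univ]
  grind

lemma exists_isPerfectMatching_adj_of_induce {u v : W} (huv : G.Adj u v)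
    {N : (G.induce {u, v}ᶜ).Subgraph} (hN : N.IsPerfectMatching) :
    ∃ N' : G.Subgraph, N'.IsPerfectMatching ∧ N'.Adj u v := by
  let ι := SimpleGraph.Embedding.induce (G := G) {u, v}ᶜ
  have verts_map : (N.map ι.toHom).verts = {u, v}ᶜ := by
    rw [SimpleGraph.Subgraph.map_verts, hN.2.verts_eq_univ, Set.image_univ]
    exact Subtype.range_coe
  refine ⟨N.map ι.toHom ⊔ G.subgraphOfAdj huv, ⟨?_, ?_⟩, ?_⟩
  · refine (hN.1.map ι.toHom ι.injective).sup (.subgraphOfAdj huv) ?_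
    refine Set.disjoint_of_subset (SimpleGraph.Subgraph.support_subset_verts _)
      (SimpleGraph.Subgraph.support_subset_verts _) ?_
    rw [verts_map]
    exact disjoint_compl_left
  · rw [SimpleGraph.Subgraph.isSpanning_iff, SimpleGraph.Subgraph.verts_sup, verts_map]
    exact Set.compl_union_self _
  · simp

lemma existsUnique_mem_edgeSet {N : G.Subgraph}
    (hN : N.IsPerfectMatching) (v : W) : ∃! p, p ∈ N.edgeSet ∧ v ∈ p := by
  obtain ⟨w, hvw, hw⟩ := SimpleGraph.Subgraph.isPerfectMatching_iff.1 hN v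
  refine ⟨s(v, w), ⟨hvw, Sym2.mem_mk_left v w⟩, ?_⟩
  rintro _ ⟨hp, x, rfl⟩
  rw [hw x hp]

end SimpleGraphs

lemma exists_isPerfectMatching_of_underlying {N : (underlying ends).Subgraph}
    (hN : N.IsPerfectMatching) (he : ends e ∈ N.edgeSet) :
    ∃ M, IsPerfectMatching ends M ∧ e ∈ M := by
  have edgeSet_subset : N.edgeSet ⊆ Set.range ends := fun p hp ↦ by
    simpa using (SimpleGraph.edgeSet_fromEdgeSet _ ▸ N.edgeSet_subset hp).1
  obtain ⟨M, heM, hM⟩ := (Set.bijOn_singleton.2 rfl : Set.BijOn ends {e} {ends e}).exists_extend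
    (Set.singleton_subset_iff.2 he) edgeSet_subset
  refine ⟨M, fun v ↦ ?_, heM rfl⟩
  obtain ⟨p, ⟨hp, hvp⟩, hpu⟩ := existsUnique_mem_edgeSet hN v
  obtain ⟨f, hfM, rfl⟩ := hM.surjOn hp
  exact ⟨f, ⟨hfM, hvp⟩, fun g ⟨hgM, hvg⟩ ↦ hM.injOn hgM hfM (hpu _ ⟨hM.mapsTo hgM, hvg⟩)⟩

lemma IsRGraph_s8.not_isTutteViolator [Finite V] [Finite E] (hG : IsRGraph_s8 ends r)
    (he : ends e = s(a, b)) (S : Set ({a, b}ᶜ : Set V)) :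
    ¬ ((underlying ends).induce {a, b}ᶜ).IsTutteViolator S := by
  intro hS
  let K := (⊤ : ((underlying ends).induce {a, b}ᶜ).Subgraph).deleteVerts S
  let f : K.coe ↪g underlying ends := induceDeleteVertsEmbedding (underlying ends) {a, b}ᶜ S
  have hab : a ≠ b := by simpa [he] using hG.noLoops e
  have hcard : (Set.range f)ᶜ.ncard = S.ncard + 2 := by
    rw [ncard_compl_range_induceDeleteVertsEmbedding, compl_compl, Set.ncard_pair hab, add_comm]
  have e_induced : e ∈ inducedEdges ends (Set.range f)ᶜ := by
    rw [compl_range_induceDeleteVertsEmbedding, compl_compl, mem_inducedEdges_iff he]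
    simp
  have counting := hG.mul_ncard_oddComponents_add_two_le f e_induced
  have parity := odd_ncard_oddComponents_iff_odd_compl_range (hG.even_card (hG.ne_zero e)) f
  rw [hcard] at counting parity
  have excess : S.ncard + 2 ≤ K.coe.oddComponents.ncard := by
    have hlt : S.ncard < K.coe.oddComponents.ncard := hS
    grind
  have := Nat.mul_le_mul_left r excess
  lia

theorem IsRGraph_s8.exists_isPerfectMatching_mem [Finite V] [Finite E] (hG : IsRGraph_s8 ends r)
    (e : E) : ∃ M, IsPerfectMatching ends M ∧ e ∈ M := by
  obtain ⟨a, b, he⟩ := exists_ends_eq ends e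
  have hab : (underlying ends).Adj a b := ⟨⟨e, he⟩, by simpa [he] using hG.noLoops e⟩
  obtain ⟨N, hN⟩ := SimpleGraph.tutte.2 (hG.not_isTutteViolator he)
  obtain ⟨N', hN', hadj⟩ := exists_isPerfectMatching_adj_of_induce hab hN
  exact exists_isPerfectMatching_of_underlying hN' (he ▸ hadj)

lemma IsPerfectMatching.isFactor_compl (hM : IsPerfectMatching ends M)
    (hG : IsFactor ends (k + 1) Set.univ) : IsFactor ends k Mᶜ := by
  intro v
  obtain ⟨m, ⟨hmM, hvm⟩, hm⟩ := hM v
  have edges_eq : {e | e ∈ Mᶜ ∧ v ∈ ends e} = {e | e ∈ Set.univ ∧ v ∈ ends e} \ {m} := by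
    ext e
    simp only [Set.mem_ofPred_eq, Set.mem_compl_iff, Set.mem_sdiff, Set.mem_singleton_iff,
      Set.mem_univ, true_and]
    grind
  have hm_mem : m ∈ {e | e ∈ Set.univ ∧ v ∈ ends e} := ⟨trivial, hvm⟩
  rw [edges_eq, Set.ncard_sdiff_singleton_of_mem hm_mem, hG v, Nat.add_sub_cancel]

/-! ### Cuts of size two -/

lemma FactorComponentsHaveCard.dvd_ncard [Finite V] [Finite E]
    (hn : FactorComponentsHaveCard ends k n) (hl : NoLoops ends) (hk : Even k)
    (hF : IsFactor ends k F) (h : F ∩ edgeCut ends X ⊆ {e}) : n ∣ X.ncard :=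
  dvd_ncard_of_disjoint_edgeCut (fun v ↦ (hn F hF v).symm.dvd)
    (hF.disjoint_edgeCut_of_even hl hk h)

lemma IsRGraph_s8.exists_isFactor_notMem [Finite V] [Finite E] (hG : IsRGraph_s8 ends (k + 1))
    (e : E) : ∃ F, IsFactor ends k F ∧ e ∉ F := by
  obtain ⟨M, hM, heM⟩ := hG.exists_isPerfectMatching_mem e
  exact ⟨Mᶜ, hM.isFactor_compl hG.isFactor_univ, fun h ↦ h heM⟩

lemma IsRGraph_s8.exists_isFactor_mem [Finite V] [Finite E] (hG : IsRGraph_s8 ends (k + 1))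
    (hk : 0 < k) (e : E) : ∃ F, IsFactor ends k F ∧ e ∈ F := by
  obtain ⟨a, b, he⟩ := exists_ends_eq ends e
  have hae : a ∈ ends e := he ▸ Sym2.mem_mk_left a b
  obtain ⟨g, ⟨-, hag⟩, hge⟩ := Set.exists_ne_of_one_lt_ncard
    (show 1 < {f | f ∈ Set.univ ∧ a ∈ ends f}.ncard by rw [hG.isFactor_univ a]; lia) e
  obtain ⟨M, hM, hgM⟩ := hG.exists_isPerfectMatching_mem g
  exact ⟨Mᶜ, hM.isFactor_compl hG.isFactor_univ,
    fun heM ↦ hge ((hM a).unique ⟨hgM, hag⟩ ⟨heM, hae⟩)⟩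

theorem IsRGraph_s8.not_edgeCut_subset_pair [Finite V] [Finite E] (hG : IsRGraph_s8 ends (k + 1))
    (hk : Even k) (hk0 : 0 < k) (hn : FactorComponentsHaveCard ends k n) {e' : E}
    (he : e ∈ edgeCut ends X) : ¬ edgeCut ends X ⊆ {e, e'} := by
  intro hX
  obtain ⟨a, ha, b, hb, hab⟩ := he
  have dvd_X : n ∣ X.ncard := by
    obtain ⟨F, hF, heF⟩ := hG.exists_isFactor_notMem e
    refine hn.dvd_ncard hG.noLoops hk hF (e := e') fun f ⟨hfF, hfX⟩ ↦ ?_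
    exact (hX hfX).resolve_left fun hfe ↦ heF (hfe ▸ hfF)
  obtain ⟨F, hF, heF⟩ := hG.exists_isFactor_mem hk0 e
  let C := component ends F a
  have haC : a ∈ C := mem_component_self F a
  have hbC : b ∈ C := mem_component_of_edge heF hab haC
  have dvd_sdiff : n ∣ (X \ C).ncard := by
    refine hn.dvd_ncard hG.noLoops hk hF (e := e') fun f hf ↦ ?_
    obtain ⟨hfX, hfC⟩ := inter_edgeCut_sdiff_subset (disjoint_edgeCut_component F a) hf
    refine (hX hfX).resolve_left ?_
    rintro rfl
    exact ((mem_inducedEdges_iff hab).1 hfC).1 haC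
  have dvd_inter : n ∣ (X ∩ C).ncard := by
    rw [← Set.ncard_inter_add_ncard_sdiff_eq_ncard X C] at dvd_X
    exact (Nat.dvd_add_left dvd_sdiff).1 dvd_X
  have inter_lt : (X ∩ C).ncard < n := by
    rw [← hn F hF a]
    exact Set.ncard_lt_ncard ⟨Set.inter_subset_right, fun h ↦ hb (h hbC).1⟩
  have inter_ne_zero : (X ∩ C).ncard ≠ 0 := Set.ncard_ne_zero_of_mem ⟨ha, haC⟩
  exact inter_ne_zero (Nat.eq_zero_of_dvd_of_lt dvd_inter inter_lt)

end Mg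

theorem stmt8_general {V E : Type} [Finite V] [Finite E] {ends : E → Sym2 V} {k n : ℕ}
    (hG : Mg.IsRGraph_s8 ends (k + 1)) (hk : Even k) (hk0 : 0 < k)
    (hconn : Mg.Connected ends) (hn : Mg.FactorComponentsHaveCard ends k n) (e₁ e₂ : E) (v w : V) :
    Mg.Reach ends {f | f ≠ e₁ ∧ f ≠ e₂} v w := by
  refine Mg.reach_of_forall_inter_edgeCut_nonempty fun X hv hw ↦ ?_
  by_contra hcut
  have cut_subset : Mg.edgeCut ends X ⊆ {e₁, e₂} := fun f hf ↦ by
    by_contra hne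
    exact hcut ⟨f, not_or.1 hne, hf⟩
  obtain ⟨e, -, he⟩ := (hconn v w).inter_edgeCut_nonempty hv hw
  obtain rfl | rfl := cut_subset he
  · exact hG.not_edgeCut_subset_pair hk hk0 hn he cut_subset
  · exact hG.not_edgeCut_subset_pair hk hk0 hn he (Set.pair_comm _ _ ▸ cut_subset)

theorem stmt8 {V E : Type} [Fintype V] [Fintype E] (ends : E → Sym2 V)
    (hl : Mg.NoLoops ends) (hc : Mg.IsCubic ends) (hb : Mg.Bridgeless ends)
    (hconn : Mg.Connected ends) (h5 : Mg.TwoFactorsAllC5 ends) :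
    ∀ e₁ e₂ : E, ∀ v w : V, Mg.Reach ends {f | f ≠ e₁ ∧ f ≠ e₂} v w :=
  stmt8_general (Mg.isRGraph_three_of_bridgeless hl hc hb) even_two two_pos hconn h5
end
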